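/- Let U ⊆ ℂ be an open set, V : ℂ → ℂ differentiable on U, and λ ∈ ℂ. Let ζ₀ : ℂ → ℂ be twice differentiable on U with ζ₀'(x) = V(x) − ζ₀(x)², and let ζ₁, ζ₂ : ℂ → ℂ be twice differentiable on U with ζᵢ'(x) = V(x) − λ − ζᵢ(x)² on U and ζᵢ(x) ≠ ζ₀(x) on U for i = 1, 2. Let h : ℂ → ℂ be differentiable on U with h'(x) = ζ₂(x) − ζ₁(x) on U. Define V₊ = −ζ₀' + ζ₀² and ζ⁺ᵢ = ζᵢ + (ζᵢ' − ζ₀')/(ζᵢ − ζ₀). Then I⁺(ζ, x) = ((−ζ + ζ⁺₂(x)) / (−ζ + ζ⁺₁(x))) · ((ζ₂(x) − ζ₀(x)) / (ζ₁(x) − ζ₀(x))) · exp(h(x)) is a first integral of the transformed vector field: at every point (ζ, x) with x ∈ U and ζ ≠ ζ⁺₁(x), ∂I⁺/∂x (ζ, x) + (V₊(x) − λ − ζ²)·∂I⁺/∂ζ (ζ, x) = 0. -/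

import Mathlib

/-!
Write `Dᵢ = ζᵢ - ζ₀`, so that `Dᵢ' / Dᵢ = ζ⁺ᵢ - ζᵢ`. The two Riccati equations give
`(ζ⁺ᵢ + ζ₀) * Dᵢ = -λ`, and differentiating this relation shows that `ζ⁺ᵢ` solves the Riccati
equation of `V₊ - λ`. For any two solutions `p`, `q` of `ζ' = W - ζ²`, the vector field
`(W - ζ²) ∂/∂ζ + ∂/∂x` multiplies `q - ζ` by `-(q + ζ)`, hence `(q - ζ) / (p - ζ)` by `p - q`;
a first integral results after multiplication by any `G` with `G' / G = q - p`. For `p = ζ⁺₁` and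
`q = ζ⁺₂` the function `G = (D₂ / D₁) * exp h` has this property.
-/

section Riccati

open scoped Topology

variable {𝕜 : Type*} [NontriviallyNormedField 𝕜]

/-- `ζ` satisfies the Riccati equation `ζ' = W - ζ²` at the point `x`. The spectral parameter is
absorbed into the potential: the equation `ζ' = V - λ - ζ²` is the case `W = V - λ`. -/
def IsRiccatiSolutionAt (W ζ : 𝕜 → 𝕜) (x : 𝕜) : Prop :=
  HasDerivAt ζ (W x - ζ x ^ 2) x

/-- `I` is annihilated at `(ζ, x)` by the Riccati vector field `(W - ζ²) ∂/∂ζ + ∂/∂x`. Both partial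
derivatives are required to exist, so that no default value of `deriv` can enter. -/
def IsRiccatiFirstIntegralAt (W : 𝕜 → 𝕜) (I : 𝕜 → 𝕜 → 𝕜) (ζ x : 𝕜) : Prop :=
  ∃ Ix Iζ : 𝕜, HasDerivAt (fun t => I ζ t) Ix x ∧ HasDerivAt (fun w => I w x) Iζ ζ ∧
    Ix + (W x - ζ ^ 2) * Iζ = 0

/-- The partner potential `V₊ = -ζ₀' + ζ₀²` of the Darboux transformation built from `ζ₀`. -/
noncomputable def darbouxPotential (ζ₀ : 𝕜 → 𝕜) (x : 𝕜) : 𝕜 :=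
  -deriv ζ₀ x + ζ₀ x ^ 2

/-- The Darboux transform `ζ⁺ = ζ + (ln (ζ - ζ₀))'` of `ζ`, with the logarithmic derivative written
as a quotient; it is meaningful only where `ζ ≠ ζ₀`. -/
noncomputable def darbouxTransform (ζ₀ ζ : 𝕜 → 𝕜) (x : 𝕜) : 𝕜 :=
  ζ x + (deriv ζ x - deriv ζ₀ x) / (ζ x - ζ₀ x)

variable {V W ζ₀ ζ₁ ζ₂ p q E G : 𝕜 → 𝕜} {I : 𝕜 → 𝕜 → 𝕜} {U : Set 𝕜} {lam ζ x : 𝕜}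

lemma isRiccatiSolutionAt_of_deriv_eq (hd : DifferentiableAt 𝕜 p x)
    (hp : deriv p x = W x - p x ^ 2) : IsRiccatiSolutionAt W p x :=
  hd.hasDerivAt.congr_deriv hp

lemma IsRiccatiSolutionAt.differentiableAt (hp : IsRiccatiSolutionAt W p x) :
    DifferentiableAt 𝕜 p x :=
  HasDerivAt.differentiableAt hp

lemma IsRiccatiFirstIntegralAt.deriv_add_mul_deriv_eq_zero
    (hI : IsRiccatiFirstIntegralAt W I ζ x) :
    deriv (fun t => I ζ t) x + (W x - ζ ^ 2) * deriv (fun w => I w x) ζ = 0 := by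
  obtain ⟨Ix, Iζ, hx, hζ, hzero⟩ := hI
  rwa [hx.deriv, hζ.deriv]

theorem isRiccatiFirstIntegralAt_div_mul (hp : IsRiccatiSolutionAt W p x)
    (hq : IsRiccatiSolutionAt W q x) (hG : HasDerivAt G ((q x - p x) * G x) x) (hζ : ζ ≠ p x) :
    IsRiccatiFirstIntegralAt W (fun w t => (-w + q t) / (-w + p t) * G t) ζ x := by
  have hden : -ζ + p x ≠ 0 := by rwa [neg_add_eq_sub, sub_ne_zero, ne_comm]
  have hneg : HasDerivAt (fun w : 𝕜 => -w) (-1) ζ := hasDerivAt_neg ζ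
  have hIx := ((hq.const_add (-ζ)).fun_div (hp.const_add (-ζ)) hden).fun_mul hG
  have hIζ := ((hneg.add_const (q x)).fun_div (hneg.add_const (p x)) hden).mul_const (G x)
  refine ⟨_, _, hIx, hIζ, ?_⟩
  field_simp
  ring

lemma hasDerivAt_sub_via_darbouxTransform (h₀ : DifferentiableAt 𝕜 ζ₀ x)
    (h₁ : DifferentiableAt 𝕜 ζ₁ x) (hne : ζ₁ x ≠ ζ₀ x) :
    HasDerivAt (fun t => ζ₁ t - ζ₀ t)
      ((darbouxTransform ζ₀ ζ₁ x - ζ₁ x) * (ζ₁ x - ζ₀ x)) x := by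
  refine (h₁.hasDerivAt.fun_sub h₀.hasDerivAt).congr_deriv ?_
  rw [darbouxTransform, add_sub_cancel_left, div_mul_cancel₀ _ (sub_ne_zero.mpr hne)]

lemma darbouxTransform_eq_neg_sub_div (h₀ : IsRiccatiSolutionAt V ζ₀ x)
    (h₁ : IsRiccatiSolutionAt (fun t => V t - lam) ζ₁ x) (hne : ζ₁ x ≠ ζ₀ x) :
    darbouxTransform ζ₀ ζ₁ x = -ζ₀ x - lam / (ζ₁ x - ζ₀ x) := by
  have hD : ζ₁ x - ζ₀ x ≠ 0 := sub_ne_zero.mpr hne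
  rw [darbouxTransform, HasDerivAt.deriv h₀, HasDerivAt.deriv h₁]
  field_simp
  ring

theorem isRiccatiSolutionAt_darbouxTransform (hU : IsOpen U)
    (h₀ : ∀ y ∈ U, IsRiccatiSolutionAt V ζ₀ y)
    (h₁ : ∀ y ∈ U, IsRiccatiSolutionAt (fun t => V t - lam) ζ₁ y)
    (hx : x ∈ U) (hne : ζ₁ x ≠ ζ₀ x) :
    IsRiccatiSolutionAt (fun t => darbouxPotential ζ₀ t - lam) (darbouxTransform ζ₀ ζ₁) x := by
  have hζ₀ : HasDerivAt ζ₀ (V x - ζ₀ x ^ 2) x := h₀ x hx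
  have hζ₁ : HasDerivAt ζ₁ (V x - lam - ζ₁ x ^ 2) x := h₁ x hx
  have hD : ζ₁ x - ζ₀ x ≠ 0 := sub_ne_zero.mpr hne
  have hne_near : ∀ᶠ y in 𝓝 x, ζ₁ y - ζ₀ y ≠ 0 :=
    (hζ₁.fun_sub hζ₀).continuousAt.eventually_ne hD
  have heq : darbouxTransform ζ₀ ζ₁ =ᶠ[𝓝 x] fun y => -ζ₀ y - lam / (ζ₁ y - ζ₀ y) := by
    filter_upwards [hU.mem_nhds hx, hne_near] with y hy hDy
    exact darbouxTransform_eq_neg_sub_div (h₀ y hy) (h₁ y hy) (sub_ne_zero.mp hDy)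
  have hderiv := hζ₀.fun_neg.fun_sub
    ((hasDerivAt_const x lam).fun_div (hζ₁.fun_sub hζ₀) hD)
  refine (hderiv.congr_of_eventuallyEq heq).congr_deriv ?_
  simp only [heq.eq_of_nhds, darbouxPotential, hζ₀.deriv]
  field_simp
  ring

lemma hasDerivAt_sub_div_sub_mul (h₀ : DifferentiableAt 𝕜 ζ₀ x) (h₁ : DifferentiableAt 𝕜 ζ₁ x)
    (h₂ : DifferentiableAt 𝕜 ζ₂ x) (hne₁ : ζ₁ x ≠ ζ₀ x) (hne₂ : ζ₂ x ≠ ζ₀ x)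
    (hE : HasDerivAt E ((ζ₂ x - ζ₁ x) * E x) x) :
    HasDerivAt (fun t => (ζ₂ t - ζ₀ t) / (ζ₁ t - ζ₀ t) * E t)
      ((darbouxTransform ζ₀ ζ₂ x - darbouxTransform ζ₀ ζ₁ x)
        * ((ζ₂ x - ζ₀ x) / (ζ₁ x - ζ₀ x) * E x)) x := by
  have hD₁ : ζ₁ x - ζ₀ x ≠ 0 := sub_ne_zero.mpr hne₁
  have hderiv := ((hasDerivAt_sub_via_darbouxTransform h₀ h₂ hne₂).fun_div
    (hasDerivAt_sub_via_darbouxTransform h₀ h₁ hne₁) hD₁).fun_mul hE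
  refine hderiv.congr_deriv ?_
  field_simp
  ring

theorem darboux_transformed_first_integral_general (hU : IsOpen U)
    (h₀ : ∀ y ∈ U, IsRiccatiSolutionAt V ζ₀ y)
    (h₁ : ∀ y ∈ U, IsRiccatiSolutionAt (fun t => V t - lam) ζ₁ y)
    (h₂ : ∀ y ∈ U, IsRiccatiSolutionAt (fun t => V t - lam) ζ₂ y)
    (hx : x ∈ U) (hne₁ : ζ₁ x ≠ ζ₀ x) (hne₂ : ζ₂ x ≠ ζ₀ x)
    (hE : HasDerivAt E ((ζ₂ x - ζ₁ x) * E x) x) (hζ : ζ ≠ darbouxTransform ζ₀ ζ₁ x) :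
    IsRiccatiFirstIntegralAt (fun t => darbouxPotential ζ₀ t - lam)
      (fun w t => (-w + darbouxTransform ζ₀ ζ₂ t) / (-w + darbouxTransform ζ₀ ζ₁ t)
        * ((ζ₂ t - ζ₀ t) / (ζ₁ t - ζ₀ t)) * E t) ζ x := by
  have hG := hasDerivAt_sub_div_sub_mul (h₀ x hx).differentiableAt (h₁ x hx).differentiableAt
    (h₂ x hx).differentiableAt hne₁ hne₂ hE
  simpa only [mul_assoc] using isRiccatiFirstIntegralAt_div_mul
    (isRiccatiSolutionAt_darbouxTransform hU h₀ h₁ hx hne₁)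
    (isRiccatiSolutionAt_darbouxTransform hU h₀ h₂ hx hne₂) hG hζ

end Riccati

/-- Proposition 3.4, first-integral item:
I⁺(ζ,x) = ((−ζ + ζ⁺₂(x))/(−ζ + ζ⁺₁(x)))·((ζ₂(x) − ζ₀(x))/(ζ₁(x) − ζ₀(x)))·exp(h(x))
is a first integral of the transformed vector field
X⁺ = (V₊ − λ − ζ²)·∂/∂ζ + ∂/∂x, where V₊ = −ζ₀' + ζ₀²,
ζ⁺ᵢ = ζᵢ + (ζᵢ' − ζ₀')/(ζᵢ − ζ₀) and h' = ζ₂ − ζ₁. -/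
theorem darboux_transformed_first_integral
    (U : Set ℂ) (hU : IsOpen U) (V : ℂ → ℂ) (lam : ℂ)
    (hV : ∀ x ∈ U, DifferentiableAt ℂ V x)
    (ζ₀ : ℂ → ℂ)
    (hζ₀d1 : ∀ x ∈ U, DifferentiableAt ℂ ζ₀ x)
    (hζ₀d2 : ∀ x ∈ U, DifferentiableAt ℂ (deriv ζ₀) x)
    (hric₀ : ∀ x ∈ U, deriv ζ₀ x = V x - ζ₀ x ^ 2)
    (ζ₁ ζ₂ : ℂ → ℂ)
    (hζ₁d1 : ∀ x ∈ U, DifferentiableAt ℂ ζ₁ x)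
    (hζ₁d2 : ∀ x ∈ U, DifferentiableAt ℂ (deriv ζ₁) x)
    (hric₁ : ∀ x ∈ U, deriv ζ₁ x = V x - lam - ζ₁ x ^ 2)
    (hne₁ : ∀ x ∈ U, ζ₁ x ≠ ζ₀ x)
    (hζ₂d1 : ∀ x ∈ U, DifferentiableAt ℂ ζ₂ x)
    (hζ₂d2 : ∀ x ∈ U, DifferentiableAt ℂ (deriv ζ₂) x)
    (hric₂ : ∀ x ∈ U, deriv ζ₂ x = V x - lam - ζ₂ x ^ 2)
    (hne₂ : ∀ x ∈ U, ζ₂ x ≠ ζ₀ x)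
    (h : ℂ → ℂ)
    (hhd : ∀ x ∈ U, DifferentiableAt ℂ h x)
    (hh : ∀ x ∈ U, deriv h x = ζ₂ x - ζ₁ x)
    (Vplus ζplus₁ ζplus₂ : ℂ → ℂ) (I : ℂ → ℂ → ℂ)
    (hVplus : ∀ x, Vplus x = -deriv ζ₀ x + ζ₀ x ^ 2)
    (hζplus₁ : ∀ x, ζplus₁ x = ζ₁ x + (deriv ζ₁ x - deriv ζ₀ x) / (ζ₁ x - ζ₀ x))
    (hζplus₂ : ∀ x, ζplus₂ x = ζ₂ x + (deriv ζ₂ x - deriv ζ₀ x) / (ζ₂ x - ζ₀ x))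
    (hI : ∀ ζ x, I ζ x =
      ((-ζ + ζplus₂ x) / (-ζ + ζplus₁ x)) * ((ζ₂ x - ζ₀ x) / (ζ₁ x - ζ₀ x))
        * Complex.exp (h x)) :
    ∀ (ζ : ℂ), ∀ x ∈ U, ζ ≠ ζplus₁ x →
      deriv (fun t => I ζ t) x
        + (Vplus x - lam - ζ ^ 2) * deriv (fun w => I w x) ζ = 0 := by
  intro ζ x hx hζ
  obtain rfl : Vplus = darbouxPotential ζ₀ := funext hVplus
  obtain rfl : ζplus₁ = darbouxTransform ζ₀ ζ₁ := funext hζplus₁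
  obtain rfl : ζplus₂ = darbouxTransform ζ₀ ζ₂ := funext hζplus₂
  obtain rfl := funext₂ hI
  have hexp : HasDerivAt (fun t => Complex.exp (h t)) ((ζ₂ x - ζ₁ x) * Complex.exp (h x)) x := by
    simpa only [hh x hx, mul_comm] using (hhd x hx).hasDerivAt.cexp
  exact (darboux_transformed_first_integral_general hU
    (fun y hy => isRiccatiSolutionAt_of_deriv_eq (hζ₀d1 y hy) (hric₀ y hy))
    (fun y hy => isRiccatiSolutionAt_of_deriv_eq (hζ₁d1 y hy) (hric₁ y hy))
    (fun y hy => isRiccatiSolutionAt_of_deriv_eq (hζ₂d1 y hy) (hric₂ y hy))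
    hx (hne₁ x hx) (hne₂ x hx) hexp hζ).deriv_add_mul_deriv_eq_zero
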